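/- Let G be the group presented by the generating set S and relation set R of Theorem 2.14 (the presentation of the virtual Thompson group VF) as described in the context. Then G is finitely presented: there exist a finite set T and a finite set of relators R′ contained in the free group on T such that G is isomorphic to the presented group ⟨T | R′⟩. -/

import Mathlib

/-- The alphabet Σ = {x, v}. -/
inductive Letter : Type
  | x | v
deriving DecidableEq

/-- Words on Σ (possibly empty). -/
abbrev Word := List Letter

/-- A target word t ∈ {xx, xv, vx, vv}, encoded as the pair of its two letters. -/
abbrev Tgt := Letter × Letter

/-- The word (of length two) corresponding to a target. -/
def tw (t : Tgt) : Word := [t.1, t.2]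

/-- Index for the three generators of family (i): X_{v→vv}, X_{v→vx}, X_{v→xv}. -/
inductive G1 : Type
  | vv   -- X_{v→vv}
  | vx   -- X_{v→vx}
  | xv   -- X_{v→xv}
deriving DecidableEq

/-- Index for the four kinds of generators of family (iii):
X_{x→vv,u}, X_{x→vx,u}, X_{v→xx,u}, X_{v→xv,u}. -/
inductive G3 : Type
  | xvv  -- X_{x→vv,u}
  | xvx  -- X_{x→vx,u}
  | vxx  -- X_{v→xx,u}
  | vxv  -- X_{v→xv,u}
deriving DecidableEq

/-- The generating set S of the presentation of the virtual Thompson group VF. -/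
inductive Gen : Type
  /-- family (i): X_{v→vv}, X_{v→vx}, X_{v→xv} -/
  | fam1 : G1 → Gen
  /-- family (ii): X_{a, s→t, u} with a ∈ {x,v}, s ∈ {x,v}, t ∈ {xx,xv,vx,vv}, u any word -/
  | fam2 : Letter → Letter → Tgt → Word → Gen
  /-- family (iii): X_{c, u} with c one of x→vv, x→vx, v→xx, v→xv and u a nonempty word -/
  | fam3 : G3 → {u : Word // u ≠ []} → Gen

/-- The corresponding generator of the free group on S. -/
def X (g : Gen) : FreeGroup Gen := FreeGroup.of g

open Letter in
/-- The relators of the presentation of VF (each relation A·B = C·D becomes the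
relator A·B·(C·D)⁻¹). -/
inductive VFRel : FreeGroup Gen → Prop
  /-- (R1) and (R2): for a ∈ {x, v},
  X_{a,s₁→t₁, p s₂ q} X_{a,s₂→t₂, q} = X_{a,s₂→t₂, q} X_{a,s₁→t₁, p t₂ q}. -/
  | r12 (a s₁ s₂ : Letter) (t₁ t₂ : Tgt) (p q : Word) :
      VFRel (X (.fam2 a s₁ t₁ (p ++ [s₂] ++ q)) * X (.fam2 a s₂ t₂ q) *
        (X (.fam2 a s₂ t₂ q) * X (.fam2 a s₁ t₁ (p ++ tw t₂ ++ q)))⁻¹)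
  /-- (R3): X_{x,s→t,q} X_{x→vv, p t q} = X_{x→vv, p s q} X_{v,s→t,q}. -/
  | r3 (s : Letter) (t : Tgt) (p q : Word) :
      VFRel (X (.fam2 x s t q) * X (.fam3 .xvv ⟨p ++ tw t ++ q, by simp [tw]⟩) *
        (X (.fam3 .xvv ⟨p ++ [s] ++ q, by simp⟩) * X (.fam2 v s t q))⁻¹)
  /-- (R4): X_{x,s→t,q} X_{x→vx, p t q} = X_{x→vx, p s q} X_{v,s→t,q}. -/
  | r4 (s : Letter) (t : Tgt) (p q : Word) :
      VFRel (X (.fam2 x s t q) * X (.fam3 .xvx ⟨p ++ tw t ++ q, by simp [tw]⟩) *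
        (X (.fam3 .xvx ⟨p ++ [s] ++ q, by simp⟩) * X (.fam2 v s t q))⁻¹)
  /-- (R5): X_{v,s→t,q} X_{v→xx, p t q} = X_{v→xx, p s q} X_{x,s→t,q}. -/
  | r5 (s : Letter) (t : Tgt) (p q : Word) :
      VFRel (X (.fam2 v s t q) * X (.fam3 .vxx ⟨p ++ tw t ++ q, by simp [tw]⟩) *
        (X (.fam3 .vxx ⟨p ++ [s] ++ q, by simp⟩) * X (.fam2 x s t q))⁻¹)
  /-- (R6): X_{v,s→t,q} X_{v→xv, p t q} = X_{v→xv, p s q} X_{x,s→t,q}. -/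
  | r6 (s : Letter) (t : Tgt) (p q : Word) :
      VFRel (X (.fam2 v s t q) * X (.fam3 .vxv ⟨p ++ tw t ++ q, by simp [tw]⟩) *
        (X (.fam3 .vxv ⟨p ++ [s] ++ q, by simp⟩) * X (.fam2 x s t q))⁻¹)

/-- The set of relators. -/
def VFrels : Set (FreeGroup Gen) := {g | VFRel g}

/-- The virtual Thompson group VF, as the presented group ⟨S | R⟩. -/
abbrev VF := PresentedGroup VFrels

section core
variable {M Y : Type*} [Monoid M]

/-- Relations on long words follow from the relations on words of length at most four together
with the recursive rule replacing the last two letters by the letter `x`. -/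
lemma core_rel (act : Y → M → Y) (act_mul : ∀ y m n, act (act y m) n = act y (m * n))
    (a : Letter → Letter → Letter → Word → M)
    (a1 : ∀ s₁ b c s t₁ t₂ (p q : Word), p.length + q.length ≤ 2 →
      a s₁ b c (p ++ s :: q) * a s t₁ t₂ q = a s t₁ t₂ q * a s₁ b c (p ++ t₁ :: t₂ :: q))
    (a2 : ∀ s₁ b c t₁ t₂ (p : Word),
      a s₁ b c (p ++ [.x]) * a .x t₁ t₂ [] = a .x t₁ t₂ [] * a s₁ b c (p ++ [t₁, t₂]))
    (Φ : Word → Y)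
    (f1 : ∀ s t₁ t₂ (p q : Word), p.length + q.length ≤ 2 →
      act (Φ (p ++ s :: q)) (a s t₁ t₂ q) = Φ (p ++ t₁ :: t₂ :: q))
    (f2 : ∀ t₁ t₂ (p : Word), act (Φ (p ++ [.x])) (a .x t₁ t₂ []) = Φ (p ++ [t₁, t₂])) :
    ∀ (n : ℕ) s t₁ t₂ (p q : Word), p.length + q.length = n →
      act (Φ (p ++ s :: q)) (a s t₁ t₂ q) = Φ (p ++ t₁ :: t₂ :: q) := by
  intro n
  induction n using Nat.strong_induction_on with
  | _ n ih =>
  intro s t₁ t₂ p q hn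
  by_cases hs : p.length + q.length ≤ 2
  · exact f1 _ _ _ _ _ hs
  rcases q.eq_nil_or_concat with rfl | ⟨q₁, d, rfl⟩
  · rcases p.eq_nil_or_concat with rfl | ⟨p₁, b, rfl⟩
    · simp at hs
    rcases p₁.eq_nil_or_concat with rfl | ⟨p', c, rfl⟩
    · simp at hs
    simp at hn
    have key : ∀ s, act (Φ (p' ++ [c, b, s])) (a s t₁ t₂ []) =
        act (Φ (p' ++ [.x, t₁, t₂])) (a .x c b [t₁, t₂]) := by
      intro s
      have e1 := ih (p'.length + 1) (by omega) .x c b p' [s] (by simp)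
      have e2 := ih (p'.length + 1) (by omega) s t₁ t₂ (p' ++ [.x]) [] (by simp)
      have e3 := a1 .x c b s t₁ t₂ [] [] (by simp)
      simp at e2 e3
      rw [← e1, ← e2, act_mul, act_mul, e3]
    have := f2 t₁ t₂ (p' ++ [c, b])
    simp at this ⊢
    rw [← this, key, key]
  rcases q₁.eq_nil_or_concat with rfl | ⟨q', c, rfl⟩
  · rcases p.eq_nil_or_concat with rfl | ⟨p₁, b, rfl⟩
    · simp at hs
    rcases p₁.eq_nil_or_concat with rfl | ⟨p', c, rfl⟩
    · simp at hs
    simp at hn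
    have e1 := ih (p'.length + 2) (by omega) .x c b p' [s, d] (by simp)
    have e2 := ih (p'.length + 2) (by omega) s t₁ t₂ (p' ++ [.x]) [d] (by simp)
    have e3 := a1 .x c b s t₁ t₂ [] [d] (by simp)
    have e4 := f2 t₂ d (p' ++ [c, b, t₁])
    have e5 := ih (p'.length + 2) (by omega) .x c b p' [t₁, .x] (by simp)
    have e6 := a2 .x c b t₂ d [t₁]
    have e7 := f2 t₂ d (p' ++ [.x, t₁])
    simp at e2 e3 e4 e6 e7 ⊢
    rw [← e1, ← e4, ← e5, act_mul, act_mul, e3, e6, ← act_mul, ← act_mul, e2, e7]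
  · simp at hn
    have e1 := f2 c d (p ++ s :: q')
    have e2 := a2 s t₁ t₂ c d q'
    have e3 := ih (p.length + (q'.length + 1)) (by omega) s t₁ t₂ p (q' ++ [.x]) (by simp)
    have e4 := f2 c d (p ++ t₁ :: t₂ :: q')
    simp at e1 e3 e4 ⊢
    rw [← e1, ← e4, act_mul, ← e2, ← act_mul, e3]

end core

section ext
variable {K : Type*} [Group K]

/-- Auxiliary extension, on reversed words. -/
def extR (φ : Word → K) (l r : Letter → Letter → K) : Word → K
  | [] => φ []
  | [b] => φ [b]
  | b :: a :: w =>
    if w.length ≤ 2 then φ (b :: a :: w).reverse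
    else (l a b)⁻¹ * extR φ l r (.x :: w) * r a b
termination_by w => w.length

/-- Extension of a function on short words to all words. -/
def ext4 (φ : Word → K) (l r : Letter → Letter → K) (w : Word) : K := extR φ l r w.reverse

lemma ext4_short (φ : Word → K) (l r : Letter → Letter → K) (w : Word) (h : w.length ≤ 4) :
    ext4 φ l r w = φ w := by
  obtain ⟨w', rfl⟩ : ∃ w', w = w'.reverse := ⟨w.reverse, by simp⟩
  unfold ext4
  match w' with
  | [] => simp [extR]
  | [b] => simp [extR]
  | b :: a :: w =>
    simp at h
    simp only [List.reverse_reverse]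
    rw [extR, if_pos (by omega)]

lemma ext4_long (φ : Word → K) (l r : Letter → Letter → K) (w : Word) (a b : Letter)
    (h : 2 < w.length) :
    ext4 φ l r (w ++ [a, b]) = (l a b)⁻¹ * ext4 φ l r (w ++ [.x]) * r a b := by
  unfold ext4
  simp only [List.reverse_append, List.reverse_cons, List.reverse_nil, List.nil_append,
    List.cons_append]
  rw [extR, if_neg (by simpa using h)]

/-- `ext4` satisfies the two-sided relations on all words. -/
lemma ext4_rel (L R : Letter → Letter → Letter → Word → K)
    (L1 : ∀ s₁ b c s t₁ t₂ (p q : Word), p.length + q.length ≤ 2 →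
      L s₁ b c (p ++ s :: q) * L s t₁ t₂ q = L s t₁ t₂ q * L s₁ b c (p ++ t₁ :: t₂ :: q))
    (L2 : ∀ s₁ b c t₁ t₂ (p : Word),
      L s₁ b c (p ++ [.x]) * L .x t₁ t₂ [] = L .x t₁ t₂ [] * L s₁ b c (p ++ [t₁, t₂]))
    (R1 : ∀ s₁ b c s t₁ t₂ (p q : Word), p.length + q.length ≤ 2 →
      R s₁ b c (p ++ s :: q) * R s t₁ t₂ q = R s t₁ t₂ q * R s₁ b c (p ++ t₁ :: t₂ :: q))
    (R2 : ∀ s₁ b c t₁ t₂ (p : Word),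
      R s₁ b c (p ++ [.x]) * R .x t₁ t₂ [] = R .x t₁ t₂ [] * R s₁ b c (p ++ [t₁, t₂]))
    (Φ : Word → K)
    (f1 : ∀ s t₁ t₂ (p q : Word), p.length + q.length ≤ 2 →
      L s t₁ t₂ q * Φ (p ++ t₁ :: t₂ :: q) = Φ (p ++ s :: q) * R s t₁ t₂ q)
    (f2 : ∀ t₁ t₂ (p : Word),
      L .x t₁ t₂ [] * Φ (p ++ [t₁, t₂]) = Φ (p ++ [.x]) * R .x t₁ t₂ [])
    (s t₁ t₂ : Letter) (p q : Word) :
    L s t₁ t₂ q * Φ (p ++ t₁ :: t₂ :: q) = Φ (p ++ s :: q) * R s t₁ t₂ q := by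
  have := core_rel (M := K × K) (fun y m => m.1⁻¹ * y * m.2) (by intros; simp [mul_assoc])
    (fun s b c w => (L s b c w, R s b c w))
    (by intros; ext; exacts [L1 _ _ _ _ _ _ _ _ (by assumption), R1 _ _ _ _ _ _ _ _ (by assumption)])
    (by intros; ext; exacts [L2 _ _ _ _ _ _, R2 _ _ _ _ _ _]) Φ
    (by intro s t₁ t₂ p q h; simp only [mul_assoc, ← f1 s t₁ t₂ p q h, inv_mul_cancel_left])
    (by intro t₁ t₂ p; simp only [mul_assoc, ← f2 t₁ t₂ p, inv_mul_cancel_left])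
    _ s t₁ t₂ p q rfl
  rw [← this]; simp [mul_assoc]

end ext

/-- Source letter of a generator of the third family. -/
def G3.src : G3 → Letter
  | .xvv => .x | .xvx => .x | .vxx => .v | .vxv => .v

/-- Target letter of a generator of the third family. -/
def G3.tgt : G3 → Letter
  | .xvv => .v | .xvx => .v | .vxx => .x | .vxv => .x

/-- Generators with short words. -/
def Gen.small : Gen → Prop
  | .fam1 _ => True
  | .fam2 _ _ _ u => u.length ≤ 4
  | .fam3 _ u => u.1.length ≤ 4

instance : Finite Letter :=
  Finite.of_injective (fun l : Letter => (match l with | .x => true | .v => false : Bool))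
    (by intro a b; cases a <;> cases b <;> simp)

instance : Finite G1 :=
  Finite.of_injective (fun l : G1 => (match l with | .vv => 0 | .vx => 1 | .xv => 2 : Fin 3))
    (by intro a b; cases a <;> cases b <;> simp)

instance : Finite G3 :=
  Finite.of_injective
    (fun l : G3 => (match l with | .xvv => 0 | .xvx => 1 | .vxx => 2 | .vxv => 3 : Fin 4))
    (by intro a b; cases a <;> cases b <;> simp)

/-- Short words. -/
abbrev W4 := {u : Word // u.length ≤ 4}

instance : Finite W4 := (List.finite_length_le Letter 4).to_subtype

/-- The finite generating set. -/
abbrev SGen := {g : Gen // g.small}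

instance : Finite SGen :=
  Finite.of_injective (β := G1 ⊕ (Letter × Letter × Tgt × W4) ⊕ (G3 × W4))
    (fun g => match g with
      | ⟨.fam1 i, _⟩ => .inl i
      | ⟨.fam2 a s t u, h⟩ => .inr (.inl (a, s, t, ⟨u, h⟩))
      | ⟨.fam3 c u, h⟩ => .inr (.inr (c, ⟨u.1, h⟩)))
    (by
      rintro ⟨(_ | _ | ⟨_, ⟨_, _⟩⟩), _⟩ ⟨(_ | _ | ⟨_, ⟨_, _⟩⟩), _⟩ <;> simp
      · intro h1 h2 h3 h4
        exact ⟨h1, h2, h3, congrArg Subtype.val h4⟩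
      · intro h1 h4
        exact ⟨h1, congrArg Subtype.val h4⟩)

/-- Projection of generators to the free group on short generators. -/
noncomputable def sgen (g : Gen) : FreeGroup SGen :=
  open Classical in if h : g.small then FreeGroup.of ⟨g, h⟩ else 1

/-- General relators of the third family of generators. -/
def rel3 (c : G3) (s : Letter) (t : Tgt) (p q : Word) : FreeGroup Gen :=
  X (.fam2 c.src s t q) * X (.fam3 c ⟨p ++ tw t ++ q, by simp [tw]⟩) *
        (X (.fam3 c ⟨p ++ [s] ++ q, by simp⟩) * X (.fam2 c.tgt s t q))⁻¹

/-- General relators of the second family of generators. -/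
def rel2 (a s₁ s₂ : Letter) (t₁ t₂ : Tgt) (p q : Word) : FreeGroup Gen :=
  X (.fam2 a s₁ t₁ (p ++ [s₂] ++ q)) * X (.fam2 a s₂ t₂ q) *
        (X (.fam2 a s₂ t₂ q) * X (.fam2 a s₁ t₁ (p ++ tw t₂ ++ q)))⁻¹

lemma VFRel_iff (r : FreeGroup Gen) : VFRel r ↔
    (∃ a s₁ s₂ t₁ t₂ p q, r = rel2 a s₁ s₂ t₁ t₂ p q) ∨ (∃ c s t p q, r = rel3 c s t p q) := by
  constructor
  · rintro (_ | _ | _ | _ | _)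
    · exact .inl ⟨_, _, _, _, _, _, _, rfl⟩
    · exact .inr ⟨.xvv, _, _, _, _, rfl⟩
    · exact .inr ⟨.xvx, _, _, _, _, rfl⟩
    · exact .inr ⟨.vxx, _, _, _, _, rfl⟩
    · exact .inr ⟨.vxv, _, _, _, _, rfl⟩
  · rintro (⟨_, _, _, _, _, _, _, rfl⟩ | ⟨c, _, _, _, _, rfl⟩)
    · exact .r12 _ _ _ _ _ _ _
    · cases c
      exacts [.r3 _ _ _ _, .r4 _ _ _ _, .r5 _ _ _ _, .r6 _ _ _ _]

/-- The finite set of relators (as a subset of the free group on all generators). -/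
def SRel0 : Set (FreeGroup Gen) :=
  {r | (∃ a s₁ s₂ t₁ t₂ p q, List.length p + List.length q ≤ 2 ∧ r = rel2 a s₁ s₂ t₁ t₂ p q) ∨
    (∃ c s t p q, List.length p + List.length q ≤ 2 ∧ r = rel3 c s t p q)}

/-- The finite set of relators. -/
def SRel : Set (FreeGroup SGen) := Set.image (FreeGroup.lift sgen) SRel0

lemma SRel_finite : SRel.Finite := by
  apply Set.Finite.image
  apply Set.Finite.subset ((Set.finite_range (fun d : Letter × Letter × Letter × Tgt × Tgt × W4 × W4 =>
    rel2 d.1 d.2.1 d.2.2.1 d.2.2.2.1 d.2.2.2.2.1 d.2.2.2.2.2.1.1 d.2.2.2.2.2.2.1)).union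
    (Set.finite_range (fun d : G3 × Letter × Tgt × W4 × W4 =>
      rel3 d.1 d.2.1 d.2.2.1 d.2.2.2.1.1 d.2.2.2.2.1)))
  rintro r (⟨a, s₁, s₂, t₁, t₂, p, q, h, rfl⟩ | ⟨c, s, t, p, q, h, rfl⟩)
  · exact .inl ⟨(a, s₁, s₂, t₁, t₂, ⟨p, by omega⟩, ⟨q, by omega⟩), rfl⟩
  · exact .inr ⟨(c, s, t, ⟨p, by omega⟩, ⟨q, by omega⟩), rfl⟩

/-- The finitely presented group. -/
abbrev KF := PresentedGroup SRel

/-- Image of a generator in the finitely presented group (meaningful for short words). -/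
noncomputable def kgen (g : Gen) : KF := PresentedGroup.mk SRel (sgen g)

/-- Images of the second family. -/
noncomputable def KA (a s t₁ t₂ : Letter) : Word → KF :=
  ext4 (fun u => kgen (.fam2 a s (t₁, t₂) u))
    (fun b c => kgen (.fam2 a .x (b, c) [])) (fun b c => kgen (.fam2 a .x (b, c) []))

/-- Images of the third family. -/
noncomputable def KB (c : G3) : Word → KF :=
  ext4 (fun u => if h : u ≠ [] then kgen (.fam3 c ⟨u, h⟩) else 1)
    (fun b d => kgen (.fam2 c.src .x (b, d) [])) (fun b d => kgen (.fam2 c.tgt .x (b, d) []))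

lemma KA_short (a s t₁ t₂ : Letter) (u : Word) (h : u.length ≤ 4) :
    KA a s t₁ t₂ u = kgen (.fam2 a s (t₁, t₂) u) := ext4_short _ _ _ _ h

lemma KB_short (c : G3) (u : Word) (h : u.length ≤ 4) (hu : u ≠ []) :
    KB c u = kgen (.fam3 c ⟨u, hu⟩) := by
  unfold KB; rw [ext4_short _ _ _ _ h, dif_pos hu]

lemma mk_lift (r : FreeGroup Gen) (h : r ∈ SRel0) :
    PresentedGroup.mk SRel (FreeGroup.lift sgen r) = 1 :=
  PresentedGroup.one_of_mem ⟨r, h, rfl⟩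

lemma KA_rel_short (a s₁ b c s t₁ t₂ : Letter) (p q : Word) (h : p.length + q.length ≤ 2) :
    KA a s₁ b c (p ++ s :: q) * KA a s t₁ t₂ q =
      KA a s t₁ t₂ q * KA a s₁ b c (p ++ t₁ :: t₂ :: q) := by
  have := mk_lift (rel2 a s₁ s (b, c) (t₁, t₂) p q) (.inl ⟨_, _, _, _, _, _, _, h, rfl⟩)
  simp only [rel2, X, map_mul, map_inv, FreeGroup.lift_apply_of, mul_inv_eq_one] at this
  rw [KA_short _ _ _ _ _ (by simp; omega), KA_short _ _ _ _ _ (by omega),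
    KA_short _ _ _ _ _ (by simp; omega)]
  simpa [kgen, tw] using this

lemma KB_rel_short (c : G3) (s t₁ t₂ : Letter) (p q : Word) (h : p.length + q.length ≤ 2) :
    KA c.src s t₁ t₂ q * KB c (p ++ t₁ :: t₂ :: q) =
      KB c (p ++ s :: q) * KA c.tgt s t₁ t₂ q := by
  have := mk_lift (rel3 c s (t₁, t₂) p q) (.inr ⟨_, _, _, _, _, h, rfl⟩)
  simp only [rel3, X, map_mul, map_inv, FreeGroup.lift_apply_of, mul_inv_eq_one] at this
  rw [KA_short _ _ _ _ _ (by omega), KA_short _ _ _ _ _ (by omega),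
    KB_short _ _ (by simp; omega) (by simp), KB_short _ _ (by simp; omega) (by simp)]
  simpa [kgen, tw] using this

lemma KA_rec (a s₁ b c t₁ t₂ : Letter) (p : Word) :
    KA a s₁ b c (p ++ [.x]) * KA a .x t₁ t₂ [] =
      KA a .x t₁ t₂ [] * KA a s₁ b c (p ++ [t₁, t₂]) := by
  by_cases h : p.length ≤ 2
  · exact KA_rel_short a s₁ b c .x t₁ t₂ p [] (by simpa using h)
  · rw [KA_short a .x t₁ t₂ [] (by simp)]
    unfold KA
    rw [ext4_long _ _ _ p _ _ (by omega)]
    simp [mul_assoc]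

lemma KB_rec (c : G3) (t₁ t₂ : Letter) (p : Word) :
    KA c.src .x t₁ t₂ [] * KB c (p ++ [t₁, t₂]) =
      KB c (p ++ [.x]) * KA c.tgt .x t₁ t₂ [] := by
  by_cases h : p.length ≤ 2
  · exact KB_rel_short c .x t₁ t₂ p [] (by simpa using h)
  · rw [KA_short _ .x t₁ t₂ [] (by simp), KA_short _ .x t₁ t₂ [] (by simp)]
    unfold KB
    rw [ext4_long _ _ _ p _ _ (by omega)]
    simp [mul_assoc]

lemma KA_rel (a s₁ b c s t₁ t₂ : Letter) (p q : Word) :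
    KA a s t₁ t₂ q * KA a s₁ b c (p ++ t₁ :: t₂ :: q) =
    KA a s₁ b c (p ++ s :: q) * KA a s t₁ t₂ q :=
  ext4_rel (KA a) (KA a) (KA_rel_short a) (KA_rec a) (KA_rel_short a) (KA_rec a)
    (KA a s₁ b c) (fun _ _ _ _ _ h => (KA_rel_short a _ _ _ _ _ _ _ _ h).symm)
    (fun _ _ _ => (KA_rec a _ _ _ _ _ _).symm) s t₁ t₂ p q

lemma KB_rel (c : G3) (s t₁ t₂ : Letter) (p q : Word) :
    KA c.src s t₁ t₂ q * KB c (p ++ t₁ :: t₂ :: q) =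
      KB c (p ++ s :: q) * KA c.tgt s t₁ t₂ q :=
  ext4_rel (KA c.src) (KA c.tgt) (KA_rel_short _) (KA_rec _) (KA_rel_short _) (KA_rec _)
    (KB c) (KB_rel_short c) (KB_rec c) s t₁ t₂ p q

/-- Images of all generators. -/
noncomputable def KG : Gen → KF
  | .fam1 i => kgen (.fam1 i)
  | .fam2 a s t u => KA a s t.1 t.2 u
  | .fam3 c u => KB c u.1

lemma KG_rel : ∀ r ∈ VFrels, FreeGroup.lift KG r = 1 := by
  intro r hr
  rcases (VFRel_iff r).1 hr with ⟨a, s₁, s₂, t₁, t₂, p, q, rfl⟩ | ⟨c, s, t, p, q, rfl⟩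
  · simp only [rel2, X, map_mul, map_inv, FreeGroup.lift_apply_of, mul_inv_eq_one]
    simpa [KG, tw] using (KA_rel a s₁ t₁.1 t₁.2 s₂ t₂.1 t₂.2 p q).symm
  · simp only [rel3, X, map_mul, map_inv, FreeGroup.lift_apply_of, mul_inv_eq_one]
    simpa [KG, tw] using (KB_rel c s t.1 t.2 p q)

/-- The map from VF to the finitely presented group. -/
noncomputable def toKF : VF →* KF := PresentedGroup.toGroup KG_rel

/-- Generators of VF. -/
def vgen (g : Gen) : VF := PresentedGroup.of g

lemma lift_sgen (g : Gen) (h : g.small) :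
    FreeGroup.lift (fun g : SGen => vgen g.1) (sgen g) = vgen g := by
  simp [sgen, h]

lemma vf_rel2 (a s₁ s₂ : Letter) (t₁ t₂ : Tgt) (p q : Word) :
    vgen (.fam2 a s₁ t₁ (p ++ [s₂] ++ q)) * vgen (.fam2 a s₂ t₂ q) =
      vgen (.fam2 a s₂ t₂ q) * vgen (.fam2 a s₁ t₁ (p ++ tw t₂ ++ q)) := by
  have : PresentedGroup.mk VFrels (rel2 a s₁ s₂ t₁ t₂ p q) = 1 :=
    PresentedGroup.one_of_mem ((VFRel_iff _).2 (.inl ⟨_, _, _, _, _, _, _, rfl⟩))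
  simp only [rel2, X, map_mul, map_inv, mul_inv_eq_one] at this
  exact this

lemma vf_rel3 (c : G3) (s : Letter) (t : Tgt) (p q : Word) :
    vgen (.fam2 c.src s t q) * vgen (.fam3 c ⟨p ++ tw t ++ q, by simp [tw]⟩) =
      vgen (.fam3 c ⟨p ++ [s] ++ q, by simp⟩) * vgen (.fam2 c.tgt s t q) := by
  have : PresentedGroup.mk VFrels (rel3 c s t p q) = 1 :=
    PresentedGroup.one_of_mem ((VFRel_iff _).2 (.inr ⟨_, _, _, _, _, rfl⟩))
  simp only [rel3, X, map_mul, map_inv, mul_inv_eq_one] at this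
  exact this

lemma SRel_vf : ∀ r ∈ SRel, FreeGroup.lift (fun g : SGen => vgen g.1) r = 1 := by
  rintro _ ⟨r, (⟨a, s₁, s₂, t₁, t₂, p, q, h, rfl⟩ | ⟨c, s, t, p, q, h, rfl⟩), rfl⟩
  · simp only [rel2, X, map_mul, map_inv, FreeGroup.lift_apply_of, mul_inv_eq_one]
    rw [lift_sgen _ (by simp [Gen.small]; omega), lift_sgen _ (by simp [Gen.small]; omega),
      lift_sgen _ (by simp [Gen.small, tw]; omega), vf_rel2]
  · simp only [rel3, X, map_mul, map_inv, FreeGroup.lift_apply_of, mul_inv_eq_one]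
    rw [lift_sgen _ (by simp [Gen.small]; omega), lift_sgen _ (by simp [Gen.small, tw]; omega),
      lift_sgen _ (by simp [Gen.small]; omega), lift_sgen _ (by simp [Gen.small]; omega), vf_rel3]

/-- The map from the finitely presented group to VF. -/
noncomputable def ofKF : KF →* VF := PresentedGroup.toGroup SRel_vf

lemma ofKF_kgen (g : Gen) (h : g.small) : ofKF (kgen g) = vgen g := lift_sgen g h

lemma word_cases (u : Word) (h : ¬ u.length ≤ 4) :
    ∃ (p : Word) (b c : Letter), u = p ++ [b, c] ∧ 2 < p.length := by
  rcases u.eq_nil_or_concat with rfl | ⟨u₁, c, rfl⟩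
  · simp at h
  rcases u₁.eq_nil_or_concat with rfl | ⟨p, b, rfl⟩
  · simp at h
  exact ⟨p, b, c, by simp, by simp at h; omega⟩

lemma ofKF_KA (a s t₁ t₂ : Letter) (n : ℕ) :
    ∀ u : Word, u.length = n → ofKF (KA a s t₁ t₂ u) = vgen (.fam2 a s (t₁, t₂) u) := by
  induction n using Nat.strong_induction_on with
  | _ n ih =>
  intro u hu
  by_cases h : u.length ≤ 4
  · rw [KA_short _ _ _ _ _ h]; exact ofKF_kgen _ h
  obtain ⟨p, b, c, rfl, hp⟩ := word_cases u h
  have e := congrArg ofKF (KA_rec a s t₁ t₂ b c p)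
  rw [map_mul, map_mul, KA_short a .x b c [] (by simp), ofKF_kgen _ (by simp [Gen.small]),
    ih (p.length + 1) (by simp at hu; omega) _ (by simp)] at e
  have e2 := vf_rel2 a s .x (t₁, t₂) (b, c) p []
  simp only [List.append_nil, tw] at e2
  rw [e2] at e
  exact (mul_left_cancel e).symm

lemma ofKF_KB (c : G3) (n : ℕ) :
    ∀ (u : Word) (hn : u ≠ []), u.length = n → ofKF (KB c u) = vgen (.fam3 c ⟨u, hn⟩) := by
  induction n using Nat.strong_induction_on with
  | _ n ih =>
  intro u hn hu
  by_cases h : u.length ≤ 4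
  · rw [KB_short _ _ h hn]; exact ofKF_kgen _ h
  obtain ⟨p, b, d, rfl, hp⟩ := word_cases u h
  have e := congrArg ofKF (KB_rec c b d p)
  rw [map_mul, map_mul, KA_short _ .x b d [] (by simp), ofKF_kgen _ (by simp [Gen.small]),
    KA_short _ .x b d [] (by simp), ofKF_kgen _ (by simp [Gen.small]),
    ih (p.length + 1) (by simp at hu; omega) (p ++ [Letter.x]) (by simp) (by simp)] at e
  have e2 := vf_rel3 c .x (b, d) p []
  simp only [List.append_nil, tw] at e2
  rw [← e2] at e
  exact mul_left_cancel e

lemma KG_small (g : SGen) : KG g.1 = PresentedGroup.of g := by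
  have hk : kgen g.1 = PresentedGroup.of g := by
    simp only [kgen, sgen, g.2, dite_true]; rfl
  rw [← hk]
  obtain ⟨(i | ⟨a, s, t, u⟩ | ⟨c, u⟩), h⟩ := g
  · rfl
  · exact KA_short _ _ _ _ _ h
  · exact KB_short _ _ h u.2

lemma ofKF_KG (g : Gen) : ofKF (KG g) = vgen g := by
  obtain (i | ⟨a, s, t, u⟩ | ⟨c, u⟩) := g
  · exact ofKF_kgen _ trivial
  · exact ofKF_KA _ _ _ _ _ _ rfl
  · exact ofKF_KB _ _ _ _ rfl

/-- VF is finitely presented: there are a finite generating set T and a finite set of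
relators R' in the free group on T such that VF ≅ ⟨T | R'⟩. -/
theorem VF_finitely_presented :
    ∃ (T : Type) (_ : Finite T) (R' : Set (FreeGroup T)), R'.Finite ∧
      Nonempty (VF ≃* PresentedGroup R') := by
  refine ⟨SGen, inferInstance, SRel, SRel_finite, ⟨MonoidHom.toMulEquiv toKF ofKF ?_ ?_⟩⟩
  · apply PresentedGroup.ext
    intro g
    simp only [MonoidHom.comp_apply, toKF, PresentedGroup.toGroup.of, MonoidHom.id_apply]
    exact ofKF_KG g
  · apply PresentedGroup.ext
    intro g
    have : ofKF (PresentedGroup.of g) = PresentedGroup.of g.1 := PresentedGroup.toGroup.of _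
    simp only [MonoidHom.comp_apply, this, toKF, PresentedGroup.toGroup.of, MonoidHom.id_apply]
    exact KG_small g
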